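/- Let ∇K ∈ W^{1,∞}(ℝ^d), T > 0, and let f_ε : [0,T] × ℝ^d × ℝ^d → [0,∞) be a C¹, nonnegative classical solution of the kinetic aggregation equation ∂_t f_ε + v·∇_x f_ε = (1/ε) ∇_v·((v + ∇K ∗ ρ_ε) f_ε), compactly supported in (x,v) uniformly for t ∈ [0,T], with initial datum f₀ satisfying (1 + |v|) f₀ ∈ L¹(ℝ^d × ℝ^d). Set I(t) = ∫∫_{ℝ^d×ℝ^d} |v + (∇K ∗ ρ_ε)(t,x)| f_ε(t,x,v) dx dv. Then there exist constants C₀ and ε₀ > 0, depending only on ‖∇K‖_{W^{1,∞}} and ‖(1+|v|) f₀‖_{L¹}, such that for every ε ≤ ε₀ and every t ∈ [0,T], I(t) ≤ I(0) e^{−t/(2ε)} + C₀ ε. -/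

import Mathlib

open Set Filter Topology MeasureTheory

variable {d : ℕ}

/-- The macroscopic density `ρ(t,x) = ∫ f(t,x,v) dv` of a phase-space density. -/
noncomputable def kinDensity
    (f : ℝ × EuclideanSpace ℝ (Fin d) × EuclideanSpace ℝ (Fin d) → ℝ)
    (t : ℝ) (x : EuclideanSpace ℝ (Fin d)) : ℝ :=
  ∫ v, f (t, x, v)

/-- The interaction field `(∇K ∗ ρ)(t,x) = ∫ ∇K(x-y) ρ(t,y) dy`. -/
noncomputable def kinField
    (gradK : EuclideanSpace ℝ (Fin d) → EuclideanSpace ℝ (Fin d))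
    (f : ℝ × EuclideanSpace ℝ (Fin d) × EuclideanSpace ℝ (Fin d) → ℝ)
    (t : ℝ) (x : EuclideanSpace ℝ (Fin d)) : EuclideanSpace ℝ (Fin d) :=
  ∫ y, (kinDensity f t y) • gradK (x - y)

/-- The generalized first moment
`I(t) = ∫∫ |v + (∇K ∗ ρ)(t,x)| f(t,x,v) dx dv`. -/
noncomputable def kinMoment
    (gradK : EuclideanSpace ℝ (Fin d) → EuclideanSpace ℝ (Fin d))
    (f : ℝ × EuclideanSpace ℝ (Fin d) × EuclideanSpace ℝ (Fin d) → ℝ)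
    (t : ℝ) : ℝ :=
  ∫ p : EuclideanSpace ℝ (Fin d) × EuclideanSpace ℝ (Fin d),
    ‖p.2 + kinField gradK f t p.1‖ * f (t, p.1, p.2)


local notation "Eu" d => EuclideanSpace ℝ (Fin d)

/-- One explicit transport step: relaxation in velocity, then free transport. -/
def stepMap (k h : ℝ) (u : (Eu d) → (Eu d)) (p : (Eu d) × (Eu d)) : (Eu d) × (Eu d) :=
  (p.1 + h • ((1 - k) • p.2 - k • u p.1), (1 - k) • p.2 - k • u p.1)

lemma stepMap_continuous (k h : ℝ) (u : (Eu d) → (Eu d)) (hu : Continuous u) :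
    Continuous (stepMap k h u) := by
  unfold stepMap; fun_prop

lemma integral_stepMap {G : Type*} [NormedAddCommGroup G] [NormedSpace ℝ G]
    (k h : ℝ) (hk : k < 1) (u : (Eu d) → (Eu d)) (hu : Continuous u)
    (g : (Eu d) × (Eu d) → G) (hg : Continuous g) :
    ∫ p, g p = (1 - k) ^ d • ∫ p, g (stepMap k h u p) := by
  have hk' : 0 < (1 - k) ^ d := pow_pos (by linarith) d
  set c : ENNReal := ENNReal.ofReal |((1 - k) ^ d)⁻¹| with hc
  have h1 : MeasurePreserving (fun p : (Eu d) × (Eu d) => (p.1, (1 - k) • p.2 - k • u p.1))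
      (volume.prod volume) (volume.prod (c • volume)) := by
    refine MeasurePreserving.skew_product (f := id) (g := fun x v => (1 - k) • v - k • u x)
      (MeasurePreserving.id _) ?_ ?_
    · exact Continuous.measurable (by unfold Function.uncurry; fun_prop)
    · refine Eventually.of_forall fun x => ?_
      have e : (fun v : Eu d => (1 - k) • v - k • u x)
          = (fun v => v - k • u x) ∘ (fun v => (1 - k) • v) := rfl
      rw [e, ← Measure.map_map (by fun_prop) (by fun_prop),
        Measure.map_addHaar_smul _ (by linarith : (1 - k) ≠ 0)]
      simp only [finrank_euclideanSpace, Fintype.card_fin]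
      rw [Measure.map_smul, (measurePreserving_sub_right volume (k • u x)).map_eq]
  have h2 : MeasurePreserving (fun p : (Eu d) × (Eu d) => (p.1 + h • p.2, p.2))
      (volume.prod volume) (volume.prod volume) := by
    have h3 : MeasurePreserving (fun p : (Eu d) × (Eu d) => (p.1, p.2 + h • p.1))
      (volume.prod volume) (volume.prod volume) := by
      refine MeasurePreserving.skew_product (f := id) (g := fun x v => v + h • x)
        (MeasurePreserving.id _) ?_ ?_
      · exact Continuous.measurable (by unfold Function.uncurry; fun_prop)
      · exact Eventually.of_forall fun x => (measurePreserving_add_right volume (h • x)).map_eq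
    exact (Measure.measurePreserving_swap.comp h3).comp Measure.measurePreserving_swap
  have e1 : ∫ p, g (stepMap k h u p) = ∫ p : (Eu d) × (Eu d), g (p.1 + h • p.2, p.2)
      ∂(volume.prod (c • volume)) := by
    rw [← h1.map_eq, integral_map h1.measurable.aemeasurable
      (Continuous.aestronglyMeasurable (by fun_prop))]
    rfl
  have e2 : ∫ p : (Eu d) × (Eu d), g (p.1 + h • p.2, p.2) = ∫ p, g p := by
    conv_rhs => rw [Measure.volume_eq_prod, ← h2.map_eq]
    rw [integral_map h2.measurable.aemeasurable hg.aestronglyMeasurable]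
    rfl
  rw [e1, Measure.prod_smul_right, integral_smul_measure, ← Measure.volume_eq_prod, e2, hc,
    ENNReal.toReal_ofReal (abs_nonneg _), abs_of_pos (inv_pos.2 hk'), smul_smul,
    mul_inv_cancel₀ hk'.ne', one_smul]

lemma unif_small {X : Type*} [NormedAddCommGroup X] [NormedSpace ℝ X] (G : ℝ × X → ℝ)
    (hG : ContDiff ℝ 1 G) (S : Set X) (hS : IsCompact S)
    (h0 : ∀ s ∈ S, fderiv ℝ G (0, s) (1, 0) = 0) (δ : ℝ) (hδ : 0 < δ) :
    ∃ h₀ > 0, ∀ h, 0 ≤ h → h < h₀ → ∀ s ∈ S, |G (h, s) - G (0, s)| ≤ δ * h := by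
  have hc : Continuous (fun q : ℝ × X => fderiv ℝ G q (1, 0)) :=
    (hG.continuous_fderiv one_ne_zero).clm_apply continuous_const
  have hU : IsOpen {q : ℝ × X | |fderiv ℝ G q (1, 0)| < δ} :=
    isOpen_lt hc.abs continuous_const
  obtain ⟨V, W, hV, hW, hV0, hSW, hVW⟩ := generalized_tube_lemma (s := {(0:ℝ)}) (t := S)
    isCompact_singleton hS hU (by
      rintro ⟨a, s⟩ ⟨ha, hs⟩
      simp only [mem_singleton_iff] at ha
      subst ha
      simp [h0 s hs, hδ])
  obtain ⟨h₀, hh₀, hb⟩ := Metric.isOpen_iff.1 hV 0 (hV0 rfl)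
  refine ⟨h₀, hh₀, fun h hh hhl s hs => ?_⟩
  have hd : ∀ x ∈ Icc 0 h, HasDerivWithinAt (fun r => G (r, s)) (fderiv ℝ G (x, s) (1, 0))
      (Icc 0 h) x := by
    intro x _
    have := ((hG.differentiable one_ne_zero (x, s)).hasFDerivAt).comp_hasDerivAt x
      ((hasDerivAt_id x).prodMk (hasDerivAt_const x s))
    exact this.hasDerivWithinAt
  have := norm_image_sub_le_of_norm_deriv_le_segment' hd (C := δ) (fun x hx => by
    have : (x, s) ∈ V ×ˢ W := ⟨hb (by simp [abs_of_nonneg hx.1]; linarith [hx.2]), hSW hs⟩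
    exact (hVW this).le) h ⟨hh, le_rfl⟩
  simpa using this

/-- Bundled hypotheses on the solution. -/
structure Sol (d : ℕ) (A T ε R : ℝ) (gradK : (Eu d) → (Eu d))
    (f : ℝ × (Eu d) × (Eu d) → ℝ) : Prop where
  hA : 0 ≤ A
  hε : 0 < ε
  hR : 0 ≤ R
  hK : ∀ z, ‖gradK z‖ ≤ A
  hKL : ∀ z w, ‖gradK z - gradK w‖ ≤ A * ‖z - w‖
  hf : ContDiff ℝ 1 f
  hpos : ∀ q, 0 ≤ f q
  supp : ∀ t ∈ Icc (0:ℝ) T, ∀ p, R < ‖p‖ → f (t, p) = 0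
  eqn : ∀ t ∈ Icc (0:ℝ) T, ∀ x v,
          fderiv ℝ f (t, x, v) (1, v, 0) =
            ε⁻¹ * ((d : ℝ) * f (t, x, v) +
              fderiv ℝ f (t, x, v) (0, 0, v + kinField gradK f t x))

namespace Sol

variable {A T ε R : ℝ} {gradK : (Eu d) → (Eu d)} {f : ℝ × (Eu d) × (Eu d) → ℝ}

lemma contK (S : Sol d A T ε R gradK f) : Continuous gradK := by
  have : LipschitzWith A.toNNReal gradK := LipschitzWith.of_dist_le_mul fun x y => by
    rw [dist_eq_norm, dist_eq_norm, Real.coe_toNNReal _ S.hA]; exact S.hKL x y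
  exact this.continuous

lemma contf (S : Sol d A T ε R gradK f) (t : ℝ) : Continuous (fun p => f (t, p)) :=
  S.hf.continuous.comp (by fun_prop)

/-- Any continuous weight is integrable against the solution. -/
lemma integrable {G : Type*} [NormedAddCommGroup G] [NormedSpace ℝ G]
    (S : Sol d A T ε R gradK f) {t : ℝ} (ht : t ∈ Icc 0 T) (φ : (Eu d) × (Eu d) → G)
    (hφ : Continuous φ) : Integrable (fun p => f (t, p) • φ p) := by
  refine Continuous.integrable_of_hasCompactSupport ((S.contf t).smul hφ) ?_
  refine HasCompactSupport.intro (isCompact_closedBall 0 R) fun p hp => ?_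
  rw [S.supp t ht p (by simpa using hp), zero_smul]

lemma field_eq (S : Sol d A T ε R gradK f) {t : ℝ} (ht : t ∈ Icc 0 T) (x : Eu d) :
    kinField gradK f t x = ∫ p : (Eu d) × (Eu d), f (t, p) • gradK (x - p.1) := by
  have hK := S.contK
  rw [Measure.volume_eq_prod, integral_prod _ (S.integrable ht (fun p => gradK (x - p.1))
    (by fun_prop))]
  unfold kinField kinDensity
  simp_rw [integral_smul_const]

/-- total mass -/
noncomputable def mass (f : ℝ × (Eu d) × (Eu d) → ℝ) (t : ℝ) : ℝ := ∫ p, f (t, p)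

lemma mass_nonneg (S : Sol d A T ε R gradK f) (t : ℝ) : 0 ≤ mass f t :=
  integral_nonneg fun p => S.hpos _

lemma integrable_f (S : Sol d A T ε R gradK f) {t : ℝ} (ht : t ∈ Icc 0 T) :
    Integrable (fun p => f (t, p)) := by
  simpa using S.integrable ht (fun _ => (1:ℝ)) continuous_const

lemma norm_integral_le (S : Sol d A T ε R gradK f) {G : Type*} [NormedAddCommGroup G]
    [NormedSpace ℝ G] {t : ℝ} (ht : t ∈ Icc 0 T) (φ : (Eu d) × (Eu d) → G)
    (ψ : (Eu d) × (Eu d) → ℝ) (hψ : Continuous ψ) (h : ∀ p, ‖φ p‖ ≤ ψ p) :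
    ‖∫ p, f (t, p) • φ p‖ ≤ ∫ p, f (t, p) * ψ p := by
  refine norm_integral_le_of_norm_le (S.integrable ht ψ hψ) (Eventually.of_forall fun p => ?_)
  rw [norm_smul, Real.norm_of_nonneg (S.hpos _)]
  exact mul_le_mul_of_nonneg_left (h p) (S.hpos _)

lemma field_bound (S : Sol d A T ε R gradK f) {t : ℝ} (ht : t ∈ Icc 0 T) (x : Eu d) :
    ‖kinField gradK f t x‖ ≤ A * mass f t := by
  rw [S.field_eq ht]
  refine (S.norm_integral_le ht _ (fun _ => A) continuous_const fun _ => S.hK _).trans ?_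
  rw [integral_mul_const, mul_comm]; rfl

lemma field_lip (S : Sol d A T ε R gradK f) {t : ℝ} (ht : t ∈ Icc 0 T) (x y : Eu d) :
    ‖kinField gradK f t x - kinField gradK f t y‖ ≤ A * mass f t * ‖x - y‖ := by
  have hK := S.contK
  rw [S.field_eq ht, S.field_eq ht, ← integral_sub (S.integrable ht _ (by fun_prop))
    (S.integrable ht _ (by fun_prop))]
  simp_rw [← smul_sub]
  refine (S.norm_integral_le ht _ (fun _ => A * ‖x - y‖) continuous_const
    fun p => ?_).trans ?_
  · simpa using S.hKL (x - p.1) (y - p.1)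
  rw [integral_mul_const]
  apply le_of_eq
  unfold mass; ring

lemma field_cont (S : Sol d A T ε R gradK f) {t : ℝ} (ht : t ∈ Icc 0 T) :
    Continuous (kinField gradK f t) := by
  have : LipschitzWith (A * mass f t).toNNReal (kinField gradK f t) :=
    LipschitzWith.of_dist_le_mul fun x y => by
      rw [dist_eq_norm, dist_eq_norm, Real.coe_toNNReal _ (mul_nonneg S.hA (S.mass_nonneg t))]
      exact S.field_lip ht x y
  exact this.continuous

lemma field_cont_joint (S : Sol d A T ε R gradK f) :
    ContinuousOn (fun q : ℝ × (Eu d) => kinField gradK f q.1 q.2) (Icc 0 T ×ˢ univ) := by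
  have hK := S.contK
  have hf := S.hf.continuous
  have : ContinuousOn (fun q : ℝ × (Eu d) =>
      ∫ p : (Eu d) × (Eu d), f (q.1, p) • gradK (q.2 - p.1)) (Icc 0 T ×ˢ univ) := by
    refine continuousOn_integral_of_compact_support (isCompact_closedBall (0 : (Eu d) × (Eu d)) R)
      (Continuous.continuousOn (by unfold Function.uncurry; fun_prop)) ?_
    intro q p hq hp
    rw [S.supp q.1 hq.1 p (by simpa using hp), zero_smul]
  exact this.congr fun q hq => S.field_eq hq.1 q.2

lemma mass_cont (S : Sol d A T ε R gradK f) : ContinuousOn (mass f) (Icc 0 T) := by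
  have hf := S.hf.continuous
  refine continuousOn_integral_of_compact_support (isCompact_closedBall (0 : (Eu d) × (Eu d)) R)
      (Continuous.continuousOn (by unfold Function.uncurry; fun_prop)) ?_
  intro q p hq hp
  exact S.supp q hq p (by simpa using hp)

lemma moment_cont (S : Sol d A T ε R gradK f) :
    ContinuousOn (kinMoment gradK f) (Icc 0 T) := by
  have hf := S.hf.continuous
  refine continuousOn_integral_of_compact_support (isCompact_closedBall (0 : (Eu d) × (Eu d)) R)
      ?_ ?_
  · unfold Function.uncurry
    refine ContinuousOn.mul (ContinuousOn.norm (ContinuousOn.add (by fun_prop) ?_)) (by fun_prop)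
    exact S.field_cont_joint.comp (f := fun q : ℝ × (Eu d) × (Eu d) => (q.1, q.2.1))
      (by fun_prop) fun q hq => ⟨hq.1, mem_univ _⟩
  intro q p hq hp
  rw [S.supp q hq p (by simpa using hp), mul_zero]

/-- The key transport estimate. -/
lemma transport_pt (S : Sol d A T ε R gradK f) {t : ℝ} (ht : t ∈ Icc 0 T) (R' δ : ℝ)
    (hδ : 0 < δ) : ∃ h₀ > 0, ∀ h, 0 ≤ h → h < h₀ → ∀ p : (Eu d) × (Eu d), ‖p‖ ≤ R' →
      |(1 - h / ε) ^ d * f (t + h, stepMap (h / ε) h (kinField gradK f t) p) - f (t, p)|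
        ≤ δ * h := by
  let V : ℝ × (Eu d) × (Eu d) × (Eu d) → (Eu d) :=
    fun q => (1 - q.1 / ε) • q.2.2.1 - (q.1 / ε) • q.2.2.2
  let G : ℝ × (Eu d) × (Eu d) × (Eu d) → ℝ :=
    fun q => (1 - q.1 / ε) ^ d * f (t + q.1, q.2.1 + q.1 • V q, V q)
  have hG : ContDiff ℝ 1 G := by
    have hf := S.hf
    have hV : ContDiff ℝ 1 V := by fun_prop
    fun_prop
  let s : (Eu d) × (Eu d) → (Eu d) × (Eu d) × (Eu d) := fun p => (p.1, p.2, kinField gradK f t p.1)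
  have hs : Continuous s := by
    have := S.field_cont ht
    fun_prop
  obtain ⟨h₀, hh, H⟩ := unif_small G hG (s '' Metric.closedBall 0 R')
    ((isCompact_closedBall _ _).image hs) (by
      rintro _ ⟨p, -, rfl⟩
      set u := kinField gradK f t p.1 with hu
      have hε := S.hε.ne'
      have d1 : HasDerivAt (fun r => G (r, s p)) (fderiv ℝ G (0, s p) (1, 0)) 0 :=
        HasFDerivAt.comp_hasDerivAt (l := G) (f := fun r : ℝ => (r, s p)) (0:ℝ)
          ((hG.differentiable one_ne_zero (0, s p)).hasFDerivAt)
          ((hasDerivAt_id (0:ℝ)).prodMk (hasDerivAt_const (0:ℝ) (s p)))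
      have dV : HasDerivAt (fun r => V (r, s p)) (-(ε⁻¹ • (p.2 + u))) 0 := by
        have a1 : HasDerivAt (fun r : ℝ => r / ε) ε⁻¹ 0 := by
          simpa using (hasDerivAt_id (0:ℝ)).div_const ε
        have := ((a1.const_sub 1).smul_const p.2).sub (a1.smul_const u)
        exact this.congr_deriv (by module)
      have dP : HasDerivAt (fun r : ℝ => (1 - r / ε) ^ d) (-(d * ε⁻¹)) 0 := by
        have a1 : HasDerivAt (fun r : ℝ => r / ε) ε⁻¹ 0 := by
          simpa using (hasDerivAt_id (0:ℝ)).div_const ε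
        have := (a1.const_sub 1).pow d
        exact this.congr_deriv (by simp)
      have dX : HasDerivAt (fun r : ℝ => p.1 + r • V (r, s p)) p.2 0 := by
        have := ((hasDerivAt_id (0:ℝ)).smul dV).const_add p.1
        exact this.congr_deriv (by simp [V, s])
      have dt : HasDerivAt (fun r : ℝ => t + r) 1 0 := (hasDerivAt_id (0:ℝ)).const_add t
      have dq := dt.prodMk (dX.prodMk dV)
      have e0 : ((t + 0, p.1 + (0:ℝ) • V (0, s p), V (0, s p)) : ℝ × (Eu d) × (Eu d))
          = (t, p.1, p.2) := by simp [V, s]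
      have dF : HasFDerivAt f (fderiv ℝ f (t, p.1, p.2))
          (t + 0, p.1 + (0:ℝ) • V (0, s p), V (0, s p)) := by
        rw [e0]; exact (S.hf.differentiable one_ne_zero _).hasFDerivAt
      have d2 := dP.mul (dF.comp_hasDerivAt (0:ℝ) dq)
      have := d1.unique d2
      rw [this]
      simp only [Function.comp, e0]
      have e3 : ((1, p.2, -(ε⁻¹ • (p.2 + u))) : ℝ × (Eu d) × (Eu d))
        = (1, p.2, 0) - ε⁻¹ • (0, 0, p.2 + u) := by simp
      rw [e3, map_sub, map_smul, S.eqn t ht]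
      simp
      ring) δ hδ
  refine ⟨h₀, hh, fun h h1 h2 p hp => ?_⟩
  have := H h h1 h2 (s p) ⟨p, by simpa using hp, rfl⟩
  simpa [G, V, s, stepMap] using this

/-- radius outside of which nothing is seen by a transport step -/
noncomputable def rad (A R : ℝ) (f : ℝ × (Eu d) × (Eu d) → ℝ) (t : ℝ) : ℝ :=
  2 * (R + A * mass f t)

lemma supp_step (S : Sol d A T ε R gradK f) {t : ℝ} (ht : t ∈ Icc 0 T) {h : ℝ} (h0 : 0 ≤ h)
    (h1 : h ≤ 1) (h2 : h / ε ≤ 1 / 2) (p : (Eu d) × (Eu d))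
    (hp : ‖stepMap (h / ε) h (kinField gradK f t) p‖ ≤ R) : ‖p‖ ≤ rad A R f t := by
  have hk : 0 ≤ h / ε := div_nonneg h0 S.hε.le
  set k := h / ε
  set u := kinField gradK f t p.1 with hu
  have hub : ‖u‖ ≤ A * mass f t := S.field_bound ht _
  have hU : 0 ≤ A * mass f t := (norm_nonneg _).trans hub
  unfold stepMap at hp
  rw [← hu] at hp
  set v := (1 - k) • p.2 - k • u with hv
  rw [Prod.norm_def, max_le_iff] at hp
  obtain ⟨hx, hvR⟩ := hp
  simp only at hx hvR
  have hR := S.hR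
  unfold rad
  rw [Prod.norm_def, max_le_iff]
  constructor
  · have : p.1 = (p.1 + h • v) - h • v := by simp
    rw [this]
    refine (norm_sub_le _ _).trans ?_
    rw [norm_smul, Real.norm_of_nonneg h0]
    nlinarith [norm_nonneg v]
  · have e : (1 - k) • p.2 = v + k • u := by rw [hv]; simp
    have : (1 - k) * ‖p.2‖ ≤ ‖v‖ + k * ‖u‖ := by
      have := norm_add_le v (k • u)
      rwa [← e, norm_smul, norm_smul, Real.norm_of_nonneg hk,
        Real.norm_of_nonneg (by linarith : 0 ≤ 1 - k)] at this
    nlinarith [norm_nonneg p.2, norm_nonneg u]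

lemma transport (S : Sol d A T ε R gradK f) {t : ℝ} (ht : t ∈ Icc 0 T) (δ : ℝ)
    (hδ : 0 < δ) : ∃ h₀ > 0, ∀ h, 0 ≤ h → h < h₀ → t + h ≤ T →
      ∀ (G : Type) [NormedAddCommGroup G] [NormedSpace ℝ G] (φ : (Eu d) × (Eu d) → G) (C : ℝ),
        Continuous φ → 0 ≤ C →
        (∀ p, ‖p‖ ≤ rad A R f t → ‖φ (stepMap (h / ε) h (kinField gradK f t) p)‖ ≤ C) →
        ‖(∫ p, f (t + h, p) • φ p) -
          ∫ p, f (t, p) • φ (stepMap (h / ε) h (kinField gradK f t) p)‖ ≤ C * δ * h := by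
  set m := (volume : Measure ((Eu d) × (Eu d))).real (Metric.closedBall 0 (rad A R f t)) with hm
  have hm0 : 0 ≤ m := measureReal_nonneg
  obtain ⟨h₁, hh₁, H⟩ := S.transport_pt ht (rad A R f t) (δ / (m + 1)) (by positivity)
  have hε := S.hε
  refine ⟨min h₁ (min 1 (ε / 2)), by positivity, ?_⟩
  intro h h0 hlt hT G _ _ φ C hφ hC hb
  simp only [lt_min_iff] at hlt
  obtain ⟨l1, l2, l3⟩ := hlt
  have hk : h / ε ≤ 1 / 2 := by
    rw [div_le_iff₀ hε]; linarith
  have hth : t + h ∈ Icc 0 T := ⟨by linarith [ht.1], hT⟩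
  have hu := S.field_cont ht
  set Φ := stepMap (h / ε) h (kinField gradK f t) with hΦ
  have hΦc : Continuous Φ := stepMap_continuous _ _ _ hu
  have hF0 : ∀ p, p ∉ Metric.closedBall 0 (rad A R f t) → f (t + h, Φ p) = 0 := by
    intro p hp
    apply S.supp _ hth
    by_contra hc
    exact hp (by simpa using S.supp_step ht h0 l2.le hk p (not_lt.1 hc))
  have hf0 : ∀ p, p ∉ Metric.closedBall 0 (rad A R f t) → f (t, p) = 0 := by
    intro p hp
    apply S.supp _ ht
    have : rad A R f t < ‖p‖ := by simpa using hp
    unfold rad at this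
    have := mul_nonneg S.hA (S.mass_nonneg t)
    linarith [S.hR]
  have hfc := S.contf (t + h)
  have hfc' := S.contf t
  have i1 : Integrable (fun p => ((1 - h / ε) ^ d * f (t + h, Φ p)) • φ (Φ p)) := by
    refine Continuous.integrable_of_hasCompactSupport ?_ ?_
    · exact (continuous_const.mul (hfc.comp hΦc)).smul (hφ.comp hΦc)
    · refine HasCompactSupport.intro (isCompact_closedBall 0 (rad A R f t)) fun p hp => ?_
      rw [hF0 p hp, mul_zero, zero_smul]
  have i2 : Integrable (fun p => f (t, p) • φ (Φ p)) :=
    S.integrable ht (fun p => φ (Φ p)) (hφ.comp hΦc)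
  rw [integral_stepMap (h / ε) h (by linarith) _ hu (fun p => f (t + h, p) • φ p)
    (hfc.smul hφ), ← hΦ, ← integral_smul]
  simp_rw [smul_smul]
  rw [← integral_sub i1 i2, ← setIntegral_eq_integral_of_forall_compl_eq_zero
    (s := Metric.closedBall 0 (rad A R f t)) (fun p hp => by
      rw [hF0 p hp, hf0 p hp]; simp)]
  refine (norm_setIntegral_le_of_norm_le_const (C := δ / (m + 1) * h * C)
    (isCompact_closedBall _ _).measure_lt_top fun p hp => ?_).trans ?_
  · have hp' : ‖p‖ ≤ rad A R f t := by simpa using hp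
    rw [← sub_smul, norm_smul]
    exact mul_le_mul (H h h0 l1 p hp') (hb p hp') (norm_nonneg _) (by positivity)
  · rw [← hm]
    have : δ / (m + 1) * m ≤ δ := by
      rw [div_mul_eq_mul_div, div_le_iff₀ (by linarith)]; nlinarith
    calc δ / (m + 1) * h * C * m = (δ / (m + 1) * m) * (h * C) := by ring
      _ ≤ δ * (h * C) := mul_le_mul_of_nonneg_right this (by positivity)
      _ = C * δ * h := by ring

lemma mass_const (S : Sol d A T ε R gradK f) : ∀ t ∈ Icc 0 T, mass f t = mass f 0 := by
  refine constant_of_has_deriv_right_zero S.mass_cont fun t ht => ?_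
  have ht' : t ∈ Icc 0 T := ⟨ht.1, ht.2.le⟩
  rw [hasDerivWithinAt_iff_isLittleO, Asymptotics.isLittleO_iff]
  intro c hc
  obtain ⟨h₀, hh₀, H⟩ := S.transport ht' c hc
  have hz : ∀ᶠ z in 𝓝[≥] t, z < min (t + h₀) T :=
    mem_nhdsWithin_of_mem_nhds (Iio_mem_nhds (lt_min (by linarith) ht.2))
  filter_upwards [hz, self_mem_nhdsWithin] with z hz hz'
  simp only [lt_min_iff, mem_Ici] at hz hz'
  have := H (z - t) (by linarith) (by linarith) (by linarith) ℝ (fun _ => 1) 1 continuous_const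
    zero_le_one (fun _ _ => by simp)
  simp only [add_sub_cancel, smul_eq_mul, mul_one, one_mul] at this
  rw [smul_zero, sub_zero, Real.norm_of_nonneg (sub_nonneg.2 hz')]
  exact this

/-- absolute first velocity moment -/
noncomputable def vmom (f : ℝ × (Eu d) × (Eu d) → ℝ) (t : ℝ) : ℝ := ∫ p, f (t, p) * ‖p.2‖

lemma vmom_int (S : Sol d A T ε R gradK f) {t : ℝ} (ht : t ∈ Icc 0 T) (a b : ℝ) :
    ∫ p, f (t, p) * (a * (‖p.2‖ + b)) = a * (vmom f t + b * mass f t) := by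
  have i1 : Integrable (fun p => f (t, p) * ‖p.2‖) :=
    S.integrable ht (fun p => ‖p.2‖) (by fun_prop)
  have i2 := S.integrable_f ht
  have : (fun p => f (t, p) * (a * (‖p.2‖ + b))) =
      fun p => a * (f (t, p) * ‖p.2‖ + b * f (t, p)) := by ext p; ring
  rw [this, integral_const_mul, integral_add i1 (i2.const_mul b), integral_const_mul]
  rfl

lemma vel_bound (S : Sol d A T ε R gradK f) {t : ℝ} (ht : t ∈ Icc 0 T) {h : ℝ} (h0 : 0 ≤ h)
    (hk1 : h / ε ≤ 1) (p : (Eu d) × (Eu d)) :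
    ‖(1 - h / ε) • p.2 - (h / ε) • kinField gradK f t p.1‖
      ≤ ‖p.2‖ + h / ε * (A * mass f t) := by
  have hk : 0 ≤ h / ε := div_nonneg h0 S.hε.le
  refine (norm_sub_le _ _).trans ?_
  rw [norm_smul, norm_smul, Real.norm_of_nonneg hk, Real.norm_of_nonneg (by linarith)]
  have := S.field_bound ht p.1
  nlinarith [norm_nonneg p.2, mul_le_mul_of_nonneg_left this hk, mul_nonneg hk (norm_nonneg p.2)]

lemma moment_step (S : Sol d A T ε R gradK f) {t : ℝ} (ht : t ∈ Icc 0 T) (δ : ℝ)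
    (hδ : 0 < δ) : ∃ h₀ > 0, ∀ h, 0 ≤ h → h < h₀ → t + h ≤ T →
      kinMoment gradK f (t + h) - kinMoment gradK f t ≤
        h * (-(kinMoment gradK f t / ε) +
          2 * (A * mass f t) * (vmom f t + h / ε * (A * mass f t) * mass f t) +
          (A * mass f t + (rad A R f t + 2 * (A * mass f t))) * δ) := by
  obtain ⟨h₁, hh₁, H⟩ := S.transport ht δ hδ
  have hε := S.hε
  have hA := S.hA
  have hK := S.contK
  refine ⟨min h₁ ε, by positivity, ?_⟩
  intro h h0 hlt hT
  rw [lt_min_iff] at hlt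
  have hk1 : h / ε ≤ 1 := by rw [div_le_one hε]; exact hlt.2.le
  have hk0 : 0 ≤ h / ε := by positivity
  have hth : t + h ∈ Icc 0 T := ⟨by linarith [ht.1], hT⟩
  have hM : mass f (t + h) = mass f t := by rw [S.mass_const _ hth, S.mass_const _ ht]
  have hM0 := S.mass_nonneg t
  have hU0 : 0 ≤ A * mass f t := by positivity
  have hu := S.field_cont ht
  have hu' := S.field_cont hth
  have hvb := S.vel_bound ht h0 hk1
  replace H := H h h0 hlt.1 hT
  have hΦc : Continuous (stepMap (h / ε) h (kinField gradK f t)) := stepMap_continuous _ _ _ hu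
  set Jk := vmom f t + h / ε * (A * mass f t) * mass f t with hJk
  -- variation of the field in time
  have hD : ∀ z, ‖kinField gradK f (t + h) z - kinField gradK f t z‖ ≤ A * h * Jk + A * δ * h := by
    intro z
    have a1 := H (Eu d) (fun p => gradK (z - p.1)) A (by fun_prop) hA (fun p _ => S.hK _)
    rw [← S.field_eq hth] at a1
    have a2 : ‖(∫ p, f (t, p) • gradK (z - (stepMap (h / ε) h (kinField gradK f t) p).1))
        - kinField gradK f t z‖ ≤ A * h * Jk := by
      rw [S.field_eq ht, ← integral_sub
        (S.integrable ht (fun p => gradK (z - (stepMap (h / ε) h (kinField gradK f t) p).1))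
          (by fun_prop))
        (S.integrable ht _ (by fun_prop))]
      simp_rw [← smul_sub]
      refine (S.norm_integral_le ht _ (fun p => (A * h) * (‖p.2‖ + h / ε * (A * mass f t)))
        (by fun_prop) fun p => ?_).trans ?_
      · refine (S.hKL _ _).trans ?_
        rw [mul_assoc]
        refine mul_le_mul_of_nonneg_left ?_ hA
        have : z - (stepMap (h / ε) h (kinField gradK f t) p).1 - (z - p.1) =
          -(h • ((1 - h / ε) • p.2 - (h / ε) • kinField gradK f t p.1)) := by
          unfold stepMap; simp only; abel
        rw [this, norm_neg, norm_smul, Real.norm_of_nonneg h0]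
        exact mul_le_mul_of_nonneg_left (hvb p) h0
      · rw [S.vmom_int ht]
    have := norm_add_le (kinField gradK f (t + h) z -
      ∫ p, f (t, p) • gradK (z - (stepMap (h / ε) h (kinField gradK f t) p).1))
      ((∫ p, f (t, p) • gradK (z - (stepMap (h / ε) h (kinField gradK f t) p).1))
        - kinField gradK f t z)
    rw [sub_add_sub_cancel] at this
    linarith
  set D := A * h * Jk + A * δ * h with hDdef
  have hI : ∀ s, kinMoment gradK f s = ∫ p, f (s, p) • ‖p.2 + kinField gradK f s p.1‖ := by
    intro s
    unfold kinMoment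
    congr 1
    ext p
    rw [smul_eq_mul, mul_comm]
  have hrad : 0 ≤ rad A R f t := by have := S.hR; unfold rad; positivity
  have b1 := H ℝ (fun p => ‖p.2 + kinField gradK f (t + h) p.1‖)
    (rad A R f t + 2 * (A * mass f t)) (by fun_prop) (by positivity) (fun p hp => by
      rw [norm_norm]
      refine (norm_add_le _ _).trans ?_
      have c1 := S.field_bound hth (stepMap (h / ε) h (kinField gradK f t) p).1
      rw [hM] at c1
      have c2 : ‖(stepMap (h / ε) h (kinField gradK f t) p).2‖ ≤
        ‖p.2‖ + h / ε * (A * mass f t) := hvb p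
      have c3 : ‖p.2‖ ≤ ‖p‖ := norm_snd_le p
      nlinarith)
  rw [← hI] at b1
  have b2 : (∫ p, f (t, p) • ‖(stepMap (h / ε) h (kinField gradK f t) p).2 +
      kinField gradK f (t + h) (stepMap (h / ε) h (kinField gradK f t) p).1‖) ≤
      (1 - h / ε) * kinMoment gradK f t + D * mass f t + A * mass f t * h * Jk := by
    have j1 : Integrable (fun p => f (t, p) * ‖p.2 + kinField gradK f t p.1‖) :=
      S.integrable ht (fun p => ‖p.2 + kinField gradK f t p.1‖) (by fun_prop)
    have j2 := S.integrable_f ht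
    have j3 : Integrable (fun p => f (t, p) *
        ((A * mass f t * h) * (‖p.2‖ + h / ε * (A * mass f t)))) :=
      S.integrable ht (fun p => (A * mass f t * h) * (‖p.2‖ + h / ε * (A * mass f t)))
        (by fun_prop)
    have e : (1 - h / ε) * kinMoment gradK f t + D * mass f t + A * mass f t * h * Jk =
        ∫ p, ((1 - h / ε) * (f (t, p) * ‖p.2 + kinField gradK f t p.1‖) + D * f (t, p) +
          f (t, p) * ((A * mass f t * h) * (‖p.2‖ + h / ε * (A * mass f t)))) := by
      have j4 : Integrable (fun p => (1 - h / ε) * (f (t, p) * ‖p.2 + kinField gradK f t p.1‖) +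
          D * f (t, p)) := (j1.const_mul _).add (j2.const_mul _)
      rw [integral_add j4 j3,
        integral_add (j1.const_mul _) (j2.const_mul _), integral_const_mul, integral_const_mul,
        S.vmom_int ht, hI]
      rfl
    rw [e]
    refine integral_mono (S.integrable ht (fun p => ‖(stepMap (h / ε) h (kinField gradK f t) p).2 +
      kinField gradK f (t + h) (stepMap (h / ε) h (kinField gradK f t) p).1‖) (by fun_prop))
      (((j1.const_mul _).add (j2.const_mul _)).add j3) fun p => ?_
    set q := stepMap (h / ε) h (kinField gradK f t) p with hq
    have q2 : q.2 = (1 - h / ε) • p.2 - (h / ε) • kinField gradK f t p.1 := rfl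
    have q1 : q.1 - p.1 = h • ((1 - h / ε) • p.2 - (h / ε) • kinField gradK f t p.1) := by
      rw [hq]; unfold stepMap; simp only; abel
    have dec : q.2 + kinField gradK f (t + h) q.1 =
        (1 - h / ε) • (p.2 + kinField gradK f t p.1) +
        (kinField gradK f (t + h) q.1 - kinField gradK f t q.1) +
        (kinField gradK f t q.1 - kinField gradK f t p.1) := by
      rw [q2]; module
    have n1 : ‖(1 - h / ε) • (p.2 + kinField gradK f t p.1)‖ =
        (1 - h / ε) * ‖p.2 + kinField gradK f t p.1‖ := by
      rw [norm_smul, Real.norm_of_nonneg (by linarith)]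
    have n2 := hD q.1
    have n3 : ‖kinField gradK f t q.1 - kinField gradK f t p.1‖ ≤
        (A * mass f t * h) * (‖p.2‖ + h / ε * (A * mass f t)) := by
      refine (S.field_lip ht _ _).trans ?_
      rw [q1, norm_smul, Real.norm_of_nonneg h0, mul_assoc (A * mass f t)]
      exact mul_le_mul_of_nonneg_left (mul_le_mul_of_nonneg_left (hvb p) h0) hU0
    have tot : ‖q.2 + kinField gradK f (t + h) q.1‖ ≤
        (1 - h / ε) * ‖p.2 + kinField gradK f t p.1‖ + D +
        (A * mass f t * h) * (‖p.2‖ + h / ε * (A * mass f t)) := by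
      rw [dec]
      refine (norm_add₃_le).trans ?_
      rw [n1]; linarith
    have := mul_le_mul_of_nonneg_left tot (S.hpos (t, p))
    simp only [smul_eq_mul]
    linarith
  have b3 := (le_abs_self _).trans b1
  rw [hDdef] at b2
  have e4 : (1 - h / ε) * kinMoment gradK f t =
    kinMoment gradK f t - h * (kinMoment gradK f t / ε) := by ring
  linarith

lemma moment_dini (S : Sol d A T ε R gradK f) {t : ℝ} (ht : t ∈ Ico 0 T) (r : ℝ)
    (hr : -(kinMoment gradK f t / ε) + 2 * (A * mass f t) * vmom f t < r) :
    ∃ᶠ z in 𝓝[>] t, (z - t)⁻¹ * (kinMoment gradK f z - kinMoment gradK f t) < r := by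
  have ht' : t ∈ Icc 0 T := ⟨ht.1, ht.2.le⟩
  have hU0 : 0 ≤ A * mass f t := mul_nonneg S.hA (S.mass_nonneg t)
  set X := A * mass f t + (rad A R f t + 2 * (A * mass f t)) with hX
  have hX0 : 0 ≤ X := by have := S.hR; rw [hX]; unfold rad; positivity
  set gap := r - (-(kinMoment gradK f t / ε) + 2 * (A * mass f t) * vmom f t) with hgap
  have hg : 0 < gap := by linarith
  obtain ⟨h₀, hh₀, H⟩ := S.moment_step ht' (gap / (2 * (X + 1))) (by positivity)
  have hXs : X * (gap / (2 * (X + 1))) < gap / 2 := by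
    rw [← mul_div_assoc, div_lt_div_iff₀ (by positivity) (by positivity)]
    nlinarith
  have hz : ∀ᶠ z in 𝓝[>] t, z < min (t + h₀) T :=
    mem_nhdsWithin_of_mem_nhds (Iio_mem_nhds (lt_min (by linarith) ht.2))
  have hc : ∀ᶠ z in 𝓝[>] t,
      2 * (A * mass f t) * ((z - t) / ε * (A * mass f t) * mass f t) < gap / 2 := by
    have : Continuous (fun z : ℝ =>
      2 * (A * mass f t) * ((z - t) / ε * (A * mass f t) * mass f t)) := by fun_prop
    exact mem_nhdsWithin_of_mem_nhds ((isOpen_lt this continuous_const).mem_nhds (by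
      simp; linarith))
  refine Eventually.frequently ?_
  filter_upwards [hz, hc, self_mem_nhdsWithin] with z hz hc hz'
  simp only [lt_min_iff, mem_Ioi] at hz hz'
  have := H (z - t) (by linarith) (by linarith) (by linarith)
  rw [add_sub_cancel] at this
  have hzt : 0 < z - t := by linarith
  rw [inv_mul_lt_iff₀ hzt]
  refine this.trans_lt (mul_lt_mul_of_pos_left ?_ hzt)
  rw [mul_add (2 * (A * mass f t))]
  linarith

lemma vmom_le (S : Sol d A T ε R gradK f) {t : ℝ} (ht : t ∈ Icc 0 T) :
    vmom f t ≤ kinMoment gradK f t + A * mass f t * mass f t := by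
  have hu := S.field_cont ht
  have j1 : Integrable (fun p => ‖p.2 + kinField gradK f t p.1‖ * f (t, p)) := by
    simpa [mul_comm] using
      S.integrable ht (fun p => ‖p.2 + kinField gradK f t p.1‖) (by fun_prop)
  have j2 := (S.integrable_f ht).const_mul (A * mass f t)
  have : kinMoment gradK f t + A * mass f t * mass f t =
      ∫ p, (‖p.2 + kinField gradK f t p.1‖ * f (t, p) + A * mass f t * f (t, p)) := by
    rw [integral_add j1 j2, integral_const_mul]; rfl
  rw [this]
  refine integral_mono (S.integrable ht (fun p => ‖p.2‖) (by fun_prop)) (j1.add j2) fun p => ?_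
  have h1 : ‖p.2‖ ≤ ‖p.2 + kinField gradK f t p.1‖ + A * mass f t := by
    have := norm_sub_le (p.2 + kinField gradK f t p.1) (kinField gradK f t p.1)
    rw [add_sub_cancel_right] at this
    linarith [S.field_bound ht p.1]
  have := mul_le_mul_of_nonneg_left h1 (S.hpos (t, p))
  simp only
  linarith

lemma final (S : Sol d A T ε R gradK f) (B : ℝ) (hB : 0 ≤ B) (hMB : mass f 0 ≤ B)
    (hεs : ε ≤ 1 / (4 * A * B + 1)) {t : ℝ} (ht : t ∈ Icc 0 T) :
    kinMoment gradK f t ≤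
      kinMoment gradK f 0 * Real.exp (-t / (2 * ε)) + (4 * A ^ 2 * B ^ 3) * ε := by
  have hε := S.hε
  have hA := S.hA
  have hAB : 0 ≤ A * B := by positivity
  have hs : 2 * (A * B) ≤ 1 / (2 * ε) := by
    rw [le_div_iff₀ (by positivity)] at hεs ⊢
    nlinarith
  have hG := le_gronwallBound_of_liminf_deriv_right_le (f := kinMoment gradK f)
    (f' := fun t => -(kinMoment gradK f t / ε) + 2 * (A * mass f t) * vmom f t)
    (δ := kinMoment gradK f 0) (K := -(1 / (2 * ε))) (ε := 2 * A ^ 2 * B ^ 3) (a := 0) (b := T)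
    S.moment_cont (fun x hx r hr => S.moment_dini hx r hr) le_rfl (by
      intro x hx
      have hx' : x ∈ Icc 0 T := ⟨hx.1, hx.2.le⟩
      have hM0 := S.mass_nonneg x
      have hM : mass f x ≤ B := by rw [S.mass_const x hx']; exact hMB
      have hI0 : 0 ≤ kinMoment gradK f x :=
        integral_nonneg fun p => mul_nonneg (norm_nonneg _) (S.hpos _)
      have hv := S.vmom_le hx'
      have hAM : A * mass f x ≤ A * B := mul_le_mul_of_nonneg_left hM hA
      have hAMM : A * mass f x * mass f x ≤ A * B * B := mul_le_mul hAM hM hM0 hAB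
      have hv2 : vmom f x ≤ kinMoment gradK f x + A * B * B := hv.trans (by linarith)
      have hv0 : 0 ≤ vmom f x := integral_nonneg fun p => mul_nonneg (S.hpos _) (norm_nonneg _)
      have s1 : 2 * (A * mass f x) * vmom f x ≤ 2 * (A * B) * (kinMoment gradK f x + A * B * B) :=
        mul_le_mul (by linarith) hv2 hv0 (by positivity)
      have s2 : 2 * (A * B) * kinMoment gradK f x ≤ 1 / (2 * ε) * kinMoment gradK f x :=
        mul_le_mul_of_nonneg_right hs hI0
      have s3 : kinMoment gradK f x / ε = 2 * (1 / (2 * ε) * kinMoment gradK f x) := by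
        field_simp
      rw [s3]
      nlinarith) t ht
  rw [gronwallBound_of_K_ne_0 (by
    have : 0 < 1 / (2 * ε) := by positivity
    linarith)] at hG
  have e1 : -(1 / (2 * ε)) * (t - 0) = -t / (2 * ε) := by field_simp; ring
  simp only [e1] at hG
  have e2 : 2 * A ^ 2 * B ^ 3 / -(1 / (2 * ε)) = -(4 * A ^ 2 * B ^ 3 * ε) := by
    field_simp; ring
  rw [e2] at hG
  have : 0 ≤ 4 * A ^ 2 * B ^ 3 * ε * Real.exp (-t / (2 * ε)) := by positivity
  linarith

end Sol

/-- **Main estimate for smooth solutions (Proposition 4.2).**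
There exist constants `C₀, ε₀ > 0`, depending only on the dimension, a bound
`A` for `‖∇K‖_{W^{1,∞}}` and a bound `B` for `‖(1+|v|) f₀‖_{L¹}`, such that for
every `ε ≤ ε₀` and every nonnegative, compactly supported `C¹` classical
solution `f` of the kinetic aggregation equation
`∂ₜ f + v·∇ₓ f = (1/ε)∇_v·((v + ∇K ∗ ρ) f)` on `[0,T]`, the generalized moment
`I(t) = ∫∫ |v + ∇K ∗ ρ| f dxdv` satisfies
`I(t) ≤ I(0) e^{-t/(2ε)} + C₀ ε` for all `t ∈ [0,T]`. -/
theorem kinetic_moment_estimate_smooth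
    (d : ℕ) (A B : ℝ) (hA : 0 ≤ A) (hB : 0 ≤ B) :
    ∃ C₀ ε₀ : ℝ, 0 < ε₀ ∧
      ∀ (T ε : ℝ), 0 < T → 0 < ε → ε ≤ ε₀ →
      ∀ gradK : EuclideanSpace ℝ (Fin d) → EuclideanSpace ℝ (Fin d),
        (∀ z, ‖gradK z‖ ≤ A) →
        (∀ z w, ‖gradK z - gradK w‖ ≤ A * ‖z - w‖) →
      ∀ f : ℝ × EuclideanSpace ℝ (Fin d) × EuclideanSpace ℝ (Fin d) → ℝ,
        ContDiff ℝ 1 f →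
        (∀ t x v, 0 ≤ f (t, x, v)) →
        -- compact support in (x,v), uniformly for t ∈ [0,T]
        (∃ R : ℝ, ∀ t ∈ Icc (0:ℝ) T, ∀ x v, R < max ‖x‖ ‖v‖ → f (t, x, v) = 0) →
        -- (1 + |v|) f₀ ∈ L¹ with norm at most B
        Integrable (fun p : EuclideanSpace ℝ (Fin d) × EuclideanSpace ℝ (Fin d) =>
          (1 + ‖p.2‖) * f (0, p.1, p.2)) →
        (∫ p : EuclideanSpace ℝ (Fin d) × EuclideanSpace ℝ (Fin d),
          (1 + ‖p.2‖) * f (0, p.1, p.2)) ≤ B →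
        -- the kinetic aggregation equation, in directional-derivative form
        (∀ t ∈ Icc (0:ℝ) T, ∀ x v,
          fderiv ℝ f (t, x, v) (1, v, 0) =
            ε⁻¹ * ((d : ℝ) * f (t, x, v) +
              fderiv ℝ f (t, x, v) (0, 0, v + kinField gradK f t x))) →
      ∀ t ∈ Icc (0:ℝ) T,
        kinMoment gradK f t ≤
          kinMoment gradK f 0 * Real.exp (-t / (2 * ε)) + C₀ * ε := by
  refine ⟨4 * A ^ 2 * B ^ 3, 1 / (4 * A * B + 1), by positivity, ?_⟩
  intro T ε hT hε hεs gradK hK hKL f hf hpos hsupp hint hintB heqn t ht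
  obtain ⟨R, hR⟩ := hsupp
  have S : Sol d A T ε (max R 0) gradK f :=
    { hA := hA
      hε := hε
      hR := le_max_right _ _
      hK := hK
      hKL := hKL
      hf := hf
      hpos := fun q => hpos q.1 q.2.1 q.2.2
      supp := fun t ht p hp => hR t ht p.1 p.2 ((le_max_left _ _).trans_lt hp)
      eqn := heqn }
  refine S.final B hB ?_ hεs ht
  refine le_trans ?_ hintB
  refine integral_mono (S.integrable_f ⟨le_rfl, hT.le⟩) hint fun p => ?_
  have h1 := hpos 0 p.1 p.2
  have h2 := mul_nonneg (norm_nonneg p.2) h1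
  show f (0, p.1, p.2) ≤ (1 + ‖p.2‖) * f (0, p.1, p.2)
  linarith
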